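/- arXiv:2511.18652 — 3 statements merged into one kernel-verified Lean document; each statement's English description precedes it below -/
import Mathlib

section
/- Let H be a real Hilbert space, C ⊆ H nonempty closed convex, g : H → ℝ convex lower semicontinuous, T : H → H a map, and λ > 0. Let w ∈ H and let y ∈ C minimize v ↦ λ g(v) + ‖(w − λ Tw) − v‖²/2 over C (i.e., y = prox_{λg}(w − λTw)). Let r̄ ∈ C satisfy ⟨T r̄, u − r̄⟩ + g(u) − g(r̄) ≥ 0 for all u ∈ C, and assume the generalized monotonicity condition ⟨T v, v − r̄⟩ + g(v) − g(r̄) ≥ 0 for all v ∈ C. Set d = (w − y) − λ(Tw − Ty). Then ⟨y − r̄, d⟩ ≥ 0, and consequently ⟨w − r̄, d⟩ ≥ ⟨w − y, d⟩. -/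
/-!
Since `y = prox (w - lam • T w)`, the first-order inequality `prox_variational`, tested at `r`,
gives `⟪y - r, w - y - lam • T w⟫ ≥ lam * (g y - g r)`. Generalized monotonicity at `y` gives
`lam * ⟪y - r, T y⟫ ≥ lam * (g r - g y)`. The sum of the two is the first claim, and the second
follows by writing `w - r = (w - y) + (y - r)`.
-/

open scoped RealInnerProductSpace

/-- The variational characterization of the proximal point: a minimizer `y` over `C` of
`v ↦ lam * g v + ‖u - v‖ ^ 2 / 2` satisfies the first-order inequality, obtained by comparing
`y` with the points `(1 - t) • y + t • v` for small `t > 0`. -/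
lemma prox_variational {H : Type*} [NormedAddCommGroup H] [InnerProductSpace ℝ H]
    {C : Set H} (hC : Convex ℝ C) {g : H → ℝ} (hg : ConvexOn ℝ Set.univ g)
    {lam : ℝ} (hlam : 0 < lam) {u y : H} (hy : y ∈ C)
    (hmin : ∀ v ∈ C, lam * g y + ‖u - y‖ ^ 2 / 2 ≤ lam * g v + ‖u - v‖ ^ 2 / 2)
    {v : H} (hv : v ∈ C) :
    ⟪u - y, v - y⟫ ≤ lam * (g v - g y) := by
  by_contra! hlt
  obtain ⟨A, hA⟩ : ∃ A, A = ⟪u - y, v - y⟫ - lam * (g v - g y) := ⟨_, rfl⟩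
  have hApos : 0 < A := by linarith
  have key : ∀ t : ℝ, 0 < t → t ≤ 1 → A ≤ t * ‖v - y‖ ^ 2 / 2 := by
    intro t ht ht1
    have h1 := hmin _ (hC hy hv (sub_nonneg.2 ht1) ht.le (by ring))
    have h2 := hg.2 (Set.mem_univ y) (Set.mem_univ v) (sub_nonneg.2 ht1) ht.le (by ring)
    simp only [smul_eq_mul] at h2
    have h3 : u - ((1 - t) • y + t • v) = (u - y) - t • (v - y) := by module
    rw [h3, norm_sub_sq_real (u - y), inner_smul_right, norm_smul, Real.norm_of_nonneg ht.le] at h1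
    have h4 := mul_le_mul_of_nonneg_left h2 hlam.le
    refine le_of_mul_le_mul_left ?_ ht
    rw [hA]
    linarith
  have hN : 0 ≤ ‖v - y‖ ^ 2 := by positivity
  have hS : 0 < A + ‖v - y‖ ^ 2 := by linarith
  -- With `N = ‖v - y‖ ^ 2`, the choice `t = A / (A + N)` gives `t * N / 2 < A`.
  have h := key (A / (A + ‖v - y‖ ^ 2)) (by positivity) ((div_le_one hS).2 (by linarith))
  rw [div_mul_eq_mul_div, div_div, le_div_iff₀ (by positivity)] at h
  nlinarith [mul_pos hApos hApos, mul_nonneg hApos.le hN]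

theorem stmt_9 {H : Type*} [NormedAddCommGroup H] [InnerProductSpace ℝ H] [CompleteSpace H]
    (C : Set H) (hCne : C.Nonempty) (hCcl : IsClosed C) (hCcv : Convex ℝ C)
    (g : H → ℝ) (hgconv : ConvexOn ℝ Set.univ g) (hglsc : LowerSemicontinuous g)
    (T : H → H) (lam : ℝ) (hlam : 0 < lam) (w : H)
    (y : H) (hy : y ∈ C)
    (hymin : ∀ v ∈ C, lam * g y + ‖(w - lam • T w) - y‖ ^ 2 / 2
      ≤ lam * g v + ‖(w - lam • T w) - v‖ ^ 2 / 2)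
    (r : H) (hr : r ∈ C)
    (hsol : ∀ u ∈ C, ⟪T r, u - r⟫ + g u - g r ≥ 0)
    (hgm : ∀ v ∈ C, ⟪T v, v - r⟫ + g v - g r ≥ 0) :
    ⟪y - r, (w - y) - lam • (T w - T y)⟫ ≥ 0 ∧
      ⟪w - r, (w - y) - lam • (T w - T y)⟫ ≥ ⟪w - y, (w - y) - lam • (T w - T y)⟫ := by
  -- Add the proximal inequality at `v = r` to `lam` times generalized monotonicity at `v = y`.
  have h1 := prox_variational hCcv hgconv hlam hy hymin hr
  have h2 := mul_nonneg hlam.le (hgm y hy)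
  have hd : ⟪y - r, (w - y) - lam • (T w - T y)⟫
      = lam * ⟪T y, y - r⟫ - ⟪w - lam • T w - y, r - y⟫ := by
    rw [real_inner_comm, ← neg_sub y r, inner_neg_right, sub_neg_eq_add,
      ← real_inner_smul_left, ← inner_add_left]
    congr 1
    module
  have hpos : ⟪y - r, (w - y) - lam • (T w - T y)⟫ ≥ 0 := by
    rw [hd]
    linarith
  refine ⟨hpos, ?_⟩
  rw [← sub_add_sub_cancel w y r, inner_add_left]
  linarith
end

section
/- Let H be a real Hilbert space, C ⊆ H nonempty closed convex, g : H → ℝ convex lower semicontinuous, T : H → H, γ ∈ (0,2), θ ∈ (0,1), μ ∈ (0,1), and λ > 0, Λ > 0 with μλ/Λ < 1 and ‖Tw − Ty‖ ≤ (μ/Λ)‖w − y‖. Let w ∈ H, y = prox_{λg}(w − λTw), d = (w − y) − λ(Tw − Ty), Π = ⟨w − y, d⟩, τ = Π/‖d‖² if d ≠ 0 and τ = 0 otherwise, z = w − γτ d, and x⁺ = (1 − θ)w + θz. Then ‖w − y‖ ≤ (1/(θγ)) · ((1 + μλ/Λ)/(1 − μλ/Λ)) · ‖x⁺ − w‖.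 -/
/-!
Put `a = w - y`, `e = lam • (T w - T y)` and `k = μ * lam / Lam < 1`, so that `d = a - e` and
`‖e‖ ≤ k * ‖a‖`. Cauchy–Schwarz gives `⟪a, d⟫ ≥ (1 - k) * ‖a‖ ^ 2`, and the triangle inequality
gives `‖d‖ ≤ (1 + k) * ‖a‖`. Since `‖xp - w‖ = θ * γ * |τ| * ‖d‖`, which is `θ * γ * ⟪a, d⟫ / ‖d‖`
for `d ≠ 0`, the two bounds combine to the claim; if `d = 0` then `a = e`, which forces `a = 0`.
-/

open scoped RealInnerProductSpace

theorem stmt_13 {H : Type*} [NormedAddCommGroup H] [InnerProductSpace ℝ H] [CompleteSpace H]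
    (C : Set H) (hCne : C.Nonempty) (hCcl : IsClosed C) (hCcv : Convex ℝ C)
    (g : H → ℝ) (hgconv : ConvexOn ℝ Set.univ g) (hglsc : LowerSemicontinuous g)
    (T : H → H)
    (γ : ℝ) (hγ : γ ∈ Set.Ioo (0 : ℝ) 2) (θ : ℝ) (hθ : θ ∈ Set.Ioo (0 : ℝ) 1)
    (μ : ℝ) (hμ : μ ∈ Set.Ioo (0 : ℝ) 1)
    (lam Lam : ℝ) (hlam : 0 < lam) (hLam : 0 < Lam) (hmulam : μ * lam / Lam < 1)
    (w : H) (y : H) (hy : y ∈ C)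
    (hstep : ‖T w - T y‖ ≤ (μ / Lam) * ‖w - y‖)
    (hymin : ∀ v ∈ C, lam * g y + ‖(w - lam • T w) - y‖ ^ 2 / 2
      ≤ lam * g v + ‖(w - lam • T w) - v‖ ^ 2 / 2)
    (d : H) (hd : d = (w - y) - lam • (T w - T y))
    (Pi : ℝ) (hPi : Pi = ⟪w - y, d⟫)
    (τ : ℝ) (hτ0 : d = 0 → τ = 0) (hτ1 : d ≠ 0 → τ = Pi / ‖d‖ ^ 2)
    (z : H) (hz : z = w - (γ * τ) • d)
    (xp : H) (hxp : xp = (1 - θ) • w + θ • z) :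
    ‖w - y‖ ≤ (1 / (θ * γ)) * ((1 + μ * lam / Lam) / (1 - μ * lam / Lam)) * ‖xp - w‖ := by
  obtain ⟨hγ0, -⟩ := hγ
  obtain ⟨hθ0, -⟩ := hθ
  obtain ⟨hμ0, -⟩ := hμ
  have hk0 : 0 < μ * lam / Lam := by positivity
  have he : ‖lam • (T w - T y)‖ ≤ μ * lam / Lam * ‖w - y‖ := by
    rw [norm_smul, Real.norm_of_nonneg hlam.le]
    calc lam * ‖T w - T y‖ ≤ lam * (μ / Lam * ‖w - y‖) := by gcongr
      _ = μ * lam / Lam * ‖w - y‖ := by ring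
  have hx : xp - w = -((θ * γ * τ) • d) := by
    rw [hxp, hz]; module
  have hxn : ‖xp - w‖ = θ * γ * (|τ| * ‖d‖) := by
    rw [hx, norm_neg, norm_smul, Real.norm_eq_abs, abs_mul, abs_of_pos (mul_pos hθ0 hγ0), mul_assoc]
  generalize μ * lam / Lam = k at *
  generalize lam • (T w - T y) = e at *
  generalize w - y = a at *
  have hk1 : 0 < 1 - k := by linarith
  have key : (1 - k) * ‖a‖ ≤ (1 + k) * (|τ| * ‖d‖) := by
    by_cases h0 : d = 0
    · -- Here `a = e`, so `‖a‖ ≤ k * ‖a‖` with `k < 1`.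
      have hae : a = e := sub_eq_zero.mp (hd ▸ h0)
      rw [← hae] at he
      simp only [h0, norm_zero, mul_zero]
      linarith
    · have hdpos : 0 < ‖d‖ := norm_pos_iff.mpr h0
      have hPlow : (1 - k) * ‖a‖ ^ 2 ≤ Pi := by
        rw [hPi, hd, inner_sub_right, real_inner_self_eq_norm_sq]
        nlinarith [real_inner_le_norm a e, mul_le_mul_of_nonneg_left he (norm_nonneg a)]
      have hdup : ‖d‖ ≤ (1 + k) * ‖a‖ := by
        rw [hd]
        linarith [norm_sub_le a e]
      have hP0 : 0 ≤ Pi := le_trans (by positivity) hPlow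
      have hτd : |τ| * ‖d‖ = Pi / ‖d‖ := by
        rw [hτ1 h0, abs_of_nonneg (by positivity)]
        field_simp
      rw [hτd, ← mul_div_assoc, le_div_iff₀ hdpos]
      calc (1 - k) * ‖a‖ * ‖d‖ ≤ (1 - k) * ‖a‖ * ((1 + k) * ‖a‖) := by gcongr
        _ = (1 + k) * ((1 - k) * ‖a‖ ^ 2) := by ring
        _ ≤ (1 + k) * Pi := by gcongr
  have hrhs : 1 / (θ * γ) * ((1 + k) / (1 - k)) * ‖xp - w‖
      = (1 + k) * (|τ| * ‖d‖) / (1 - k) := by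
    rw [hxn]
    field_simp
  rw [hrhs, le_div_iff₀ hk1]
  linarith
end

section
/- Let H be a real inner product space, σ > 0, α and δ real numbers with 0 ≤ α < σ/(1+σ) and α(1+σ)/(1+ασ) < δ < 1. Then for all s, s', r ∈ H: (1/(1−δ))‖s − r‖² − (α/(1−δ))‖s' − r‖² + (δ(1−α)/(1−δ)²)‖s − s'‖² ≥ (1/(1−δ))(1 − α(1 + 1/σ))‖s − r‖² + (1/(1−δ))(δ(1−α)/(1−δ) − α(1+σ))‖s − s'‖² ≥ 0. -/
/-!
By the triangle inequality and the Peter–Paul inequality `2ab ≤ a²/σ + σb²`,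
`‖s' - r‖² ≤ (1 + 1/σ)‖s - r‖² + (1 + σ)‖s - s'‖²`; multiplying by `α/(1 - δ) ≥ 0` gives the first
inequality. For the second, both coefficients are nonnegative: `α < σ/(1 + σ)` says
`α(1 + 1/σ) < 1`, and `α(1 + σ) < δ(1 + ασ)` rearranges to `α(1 + σ)(1 - δ) < δ(1 - α)`.
-/

open scoped RealInnerProductSpace

lemma peter_paul {H : Type*} [NormedAddCommGroup H] {σ : ℝ} (hσ : 0 < σ) (s s' r : H) :
    ‖s' - r‖ ^ 2 ≤ (1 + 1 / σ) * ‖s - r‖ ^ 2 + (1 + σ) * ‖s - s'‖ ^ 2 := by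
  have htri : ‖s' - r‖ ≤ ‖s - r‖ + ‖s - s'‖ := by
    have := norm_sub_le_norm_sub_add_norm_sub s' s r
    rw [norm_sub_rev s' s] at this
    linarith
  have hsq : ‖s' - r‖ ^ 2 ≤ (‖s - r‖ + ‖s - s'‖) ^ 2 := by gcongr
  have hid : (1 + 1 / σ) * ‖s - r‖ ^ 2 + (1 + σ) * ‖s - s'‖ ^ 2 - (‖s - r‖ + ‖s - s'‖) ^ 2
      = (‖s - r‖ - σ * ‖s - s'‖) ^ 2 / σ := by
    field_simp
    ring
  have hnn : 0 ≤ (‖s - r‖ - σ * ‖s - s'‖) ^ 2 / σ := by positivity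
  linarith

theorem stmt_15 {H : Type*} [NormedAddCommGroup H] [InnerProductSpace ℝ H]
    (σ α δ : ℝ) (hσ : 0 < σ) (hα0 : 0 ≤ α) (hα1 : α < σ / (1 + σ))
    (hδ1 : α * (1 + σ) / (1 + α * σ) < δ) (hδ2 : δ < 1) (s s' r : H) :
    (1 / (1 - δ)) * ‖s - r‖ ^ 2 - (α / (1 - δ)) * ‖s' - r‖ ^ 2
        + (δ * (1 - α) / (1 - δ) ^ 2) * ‖s - s'‖ ^ 2
      ≥ (1 / (1 - δ)) * (1 - α * (1 + 1 / σ)) * ‖s - r‖ ^ 2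
        + (1 / (1 - δ)) * (δ * (1 - α) / (1 - δ) - α * (1 + σ)) * ‖s - s'‖ ^ 2 ∧
    (1 / (1 - δ)) * (1 - α * (1 + 1 / σ)) * ‖s - r‖ ^ 2
        + (1 / (1 - δ)) * (δ * (1 - α) / (1 - δ) - α * (1 + σ)) * ‖s - s'‖ ^ 2 ≥ 0 := by
  have hd : 0 < 1 - δ := by linarith
  constructor
  · have h := mul_le_mul_of_nonneg_left (peter_paul hσ s s' r) (div_nonneg hα0 hd.le)
    have hid : (1 / (1 - δ)) * ‖s - r‖ ^ 2 - (α / (1 - δ)) * ‖s' - r‖ ^ 2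
          + (δ * (1 - α) / (1 - δ) ^ 2) * ‖s - s'‖ ^ 2
        - ((1 / (1 - δ)) * (1 - α * (1 + 1 / σ)) * ‖s - r‖ ^ 2
          + (1 / (1 - δ)) * (δ * (1 - α) / (1 - δ) - α * (1 + σ)) * ‖s - s'‖ ^ 2)
        = α / (1 - δ) * ((1 + 1 / σ) * ‖s - r‖ ^ 2 + (1 + σ) * ‖s - s'‖ ^ 2)
          - α / (1 - δ) * ‖s' - r‖ ^ 2 := by
      have hd0 : 1 - δ ≠ 0 := hd.ne'
      field_simp
      ring
    linarith
  · have h1 : 0 ≤ 1 - α * (1 + 1 / σ) := by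
      rw [lt_div_iff₀ (by positivity)] at hα1
      have hid : 1 - α * (1 + 1 / σ) = (σ - α * (1 + σ)) / σ := by
        field_simp
        ring
      rw [hid]
      exact div_nonneg (by linarith) hσ.le
    have h2 : 0 ≤ δ * (1 - α) / (1 - δ) - α * (1 + σ) := by
      rw [div_lt_iff₀ (by positivity)] at hδ1
      rw [sub_nonneg, le_div_iff₀ hd]
      linarith
    positivity
end
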